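/- Let (A, Δ', ε) be a commutative Hopf algebra over a field k with antipode T; suppose (A, A) is a Hopf matched pair with coactions ρ and φ satisfying a_{1'} ⊗ a_{2'} = a_{1'(-1)} a_{2'[0]} ⊗ a_{1'(0)} a_{2'[1]}, and let Δ(a) = a_{1'} T(a_{2'(-1)}) ⊗ a_{2'(0)} with antipode S(a) = a_{(-1)} T(a_{(0)}), so that (A, Δ, Δ') is a commutative Hopf brace. Then the original coaction ρ is recovered from the Hopf brace by ρ(a) = S(a_1) a_{21'} ⊗ a_{22'} for all a ∈ A; conversely, starting from a commutative Hopf brace (A, Δ, Δ') and forming the matched-pair coactions ρ(a) = S(a_1) a_{21'} ⊗ a_{22'}, φ(a) = (T(a_{1'}))_{(-1)} a_{2'} ⊗ (T(a_{1'}))_{(0)} a_{3'}, the comultiplication reconstructed by a_{1'} T(a_{2'(-1)}) ⊗ a_{2'(0)} equals Δ. (These constructions are mutually inverse, giving the equivalence between commutative Hopf braces with second structure (A, Δ') and Hopf matched pairs (A, A) on (A, Δ') satisfying the above compatibility.) -/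

import Mathlib

open TensorProduct

noncomputable section

namespace HopfPaper

/-- A Hopf algebra structure (comultiplication `Δ`, counit `ε`, antipode `S`) on a
given `k`-algebra `H`, expressed in terms of `k`-linear maps.  Together with the
algebra structure of `H` this is exactly the data of a Hopf algebra
`(H, m, 1, Δ, ε, S)` over the field `k`. -/
structure HopfStruct (k : Type*) [Field k] (H : Type*) [Ring H] [Algebra k H] where
  /-- the comultiplication -/
  Δ : H →ₗ[k] H ⊗[k] H
  /-- the counit -/
  ε : H →ₗ[k] k
  /-- the antipode -/
  S : H →ₗ[k] H
  coassoc : ∀ h : H,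
    TensorProduct.map (LinearMap.id : H →ₗ[k] H) Δ (Δ h)
      = TensorProduct.assoc k H H H
          (TensorProduct.map Δ (LinearMap.id : H →ₗ[k] H) (Δ h))
  counit_left : ∀ h : H,
    TensorProduct.lid k H (TensorProduct.map ε (LinearMap.id : H →ₗ[k] H) (Δ h)) = h
  counit_right : ∀ h : H,
    TensorProduct.rid k H (TensorProduct.map (LinearMap.id : H →ₗ[k] H) ε (Δ h)) = h
  comul_mul : ∀ a b : H, Δ (a * b) = Δ a * Δ b
  comul_one : Δ 1 = 1
  counit_mul : ∀ a b : H, ε (a * b) = ε a * ε b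
  counit_one : ε 1 = 1
  antipode_left : ∀ h : H,
    LinearMap.mul' k H (TensorProduct.map S (LinearMap.id : H →ₗ[k] H) (Δ h))
      = algebraMap k H (ε h)
  antipode_right : ∀ h : H,
    LinearMap.mul' k H (TensorProduct.map (LinearMap.id : H →ₗ[k] H) S (Δ h))
      = algebraMap k H (ε h)

variable (k : Type*) [Field k]

/-- `m ↦ m ⊗ 1`. -/
def ι₁ (M N : Type*) [Ring M] [Algebra k M] [Ring N] [Algebra k N] :
    M →ₗ[k] M ⊗[k] N :=
  (TensorProduct.mk k M N).flip 1

/-- `n ↦ 1 ⊗ n`. -/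
def ι₂ (M N : Type*) [Ring M] [Algebra k M] [Ring N] [Algebra k N] :
    N →ₗ[k] M ⊗[k] N :=
  TensorProduct.mk k M N 1

/-- multiplication of three factors, `x ⊗ (y ⊗ z) ↦ x * y * z`. -/
def mul₃ (T : Type*) [Ring T] [Algebra k T] : T ⊗[k] (T ⊗[k] T) →ₗ[k] T :=
  (LinearMap.mul' k T).comp
    (TensorProduct.map (LinearMap.id : T →ₗ[k] T) (LinearMap.mul' k T))

/-- multiplication of four factors. -/
def mul₄ (T : Type*) [Ring T] [Algebra k T] :
    T ⊗[k] (T ⊗[k] (T ⊗[k] T)) →ₗ[k] T :=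
  (LinearMap.mul' k T).comp
    (TensorProduct.map (LinearMap.id : T →ₗ[k] T) (mul₃ k T))

/-- The left hand side `h_{1'} ⊗ h_{2'1} ⊗ h_{2'2}` of the Hopf brace compatibility
condition (2.1), i.e. `(id ⊗ Δ) ∘ Δ'`. -/
def braceLHS (H : Type*) [Ring H] [Algebra k H] (Δ Δ' : H →ₗ[k] H ⊗[k] H) :
    H →ₗ[k] H ⊗[k] (H ⊗[k] H) :=
  (TensorProduct.map (LinearMap.id : H →ₗ[k] H) Δ).comp Δ'

/-- The right hand side `h_{11'}S(h_2)h_{31'} ⊗ h_{12'} ⊗ h_{32'}` of the Hopf brace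
compatibility condition (2.1):  it is obtained from the twofold comultiplication
`h ↦ h_1 ⊗ (h_2 ⊗ h_3)` (using `Δ`) by applying `Δ'` to the first and third legs,
`S` to the middle leg, placing the results in the appropriate tensor positions of
`H ⊗ (H ⊗ H)` (filled with `1`s) and multiplying. -/
def braceRHS (H : Type*) [Ring H] [Algebra k H] (Δ Δ' : H →ₗ[k] H ⊗[k] H)
    (S : H →ₗ[k] H) : H →ₗ[k] H ⊗[k] (H ⊗[k] H) :=
  (mul₃ k (H ⊗[k] (H ⊗[k] H))).comp
    ((TensorProduct.map
        ((TensorProduct.map (LinearMap.id : H →ₗ[k] H) (ι₁ k H H)).comp Δ')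
        (TensorProduct.map ((ι₁ k H (H ⊗[k] H)).comp S)
          ((TensorProduct.map (LinearMap.id : H →ₗ[k] H) (ι₂ k H H)).comp Δ'))).comp
      ((TensorProduct.map (LinearMap.id : H →ₗ[k] H) Δ).comp Δ))

/-- A Hopf brace on the `k`-algebra `H` : two Hopf algebra structures sharing the
multiplication and unit of `H`, subject to the compatibility condition (2.1):
`h_{1'} ⊗ h_{2'1} ⊗ h_{2'2} = h_{11'}S(h_2)h_{31'} ⊗ h_{12'} ⊗ h_{32'}`. -/
structure HopfBrace (H : Type*) [Ring H] [Algebra k H] where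
  fst : HopfStruct k H
  snd : HopfStruct k H
  compat : ∀ h : H,
    braceLHS k H fst.Δ snd.Δ h = braceRHS k H fst.Δ snd.Δ fst.S h

/-- The coaction `ρ(h) = S(h_1) h_{21'} ⊗ h_{22'}` of Lemma 2.5. -/
def ρmap (H : Type*) [Ring H] [Algebra k H] (Δ Δ' : H →ₗ[k] H ⊗[k] H)
    (S : H →ₗ[k] H) : H →ₗ[k] H ⊗[k] H :=
  (LinearMap.mul' k (H ⊗[k] H)).comp
    ((TensorProduct.map ((ι₁ k H H).comp S) Δ').comp Δ)

/-- The coaction `φ(a) = (T(a_{1'}))_{(-1)} a_{2'} ⊗ (T(a_{1'}))_{(0)} a_{3'}`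
of Lemma 2.8(2), where `x_{(-1)} ⊗ x_{(0)} = ρ(x)`. -/
def φmap (H : Type*) [Ring H] [Algebra k H] (Δ Δ' : H →ₗ[k] H ⊗[k] H)
    (S T : H →ₗ[k] H) : H →ₗ[k] H ⊗[k] H :=
  (LinearMap.mul' k (H ⊗[k] H)).comp
    ((TensorProduct.map ((ρmap k H Δ Δ' S).comp T)
        (LinearMap.id : H ⊗[k] H →ₗ[k] H ⊗[k] H)).comp
      ((TensorProduct.map (LinearMap.id : H →ₗ[k] H) Δ').comp Δ'))

/-- `ρ : A →ₗ H ⊗ A` is a coassociative counital left coaction of the coalgebra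
`(H, ΔH, εH)`. -/
def LeftCoaction (A H : Type*) [Ring A] [Algebra k A] [Ring H] [Algebra k H]
    (ΔH : H →ₗ[k] H ⊗[k] H) (εH : H →ₗ[k] k) (ρ : A →ₗ[k] H ⊗[k] A) : Prop :=
  (∀ a : A,
    TensorProduct.map (LinearMap.id : H →ₗ[k] H) ρ (ρ a)
      = TensorProduct.assoc k H H A
          (TensorProduct.map ΔH (LinearMap.id : A →ₗ[k] A) (ρ a))) ∧
  (∀ a : A,
    TensorProduct.lid k A (TensorProduct.map εH (LinearMap.id : A →ₗ[k] A) (ρ a)) = a)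

/-- `φ : H →ₗ H ⊗ A` is a coassociative counital right coaction of the coalgebra
`(A, ΔA, εA)`. -/
def RightCoaction (A H : Type*) [Ring A] [Algebra k A] [Ring H] [Algebra k H]
    (ΔA : A →ₗ[k] A ⊗[k] A) (εA : A →ₗ[k] k) (φ : H →ₗ[k] H ⊗[k] A) : Prop :=
  (∀ h : H,
    TensorProduct.map (LinearMap.id : H →ₗ[k] H) ΔA (φ h)
      = TensorProduct.assoc k H A A
          (TensorProduct.map φ (LinearMap.id : A →ₗ[k] A) (φ h))) ∧
  (∀ h : H,
    TensorProduct.rid k H (TensorProduct.map (LinearMap.id : H →ₗ[k] H) εA (φ h)) = h)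

/-- a linear map which is moreover multiplicative and unital. -/
def IsAlgebraMorphism (M N : Type*) [Ring M] [Algebra k M] [Ring N] [Algebra k N]
    (f : M →ₗ[k] N) : Prop :=
  (∀ a b : M, f (a * b) = f a * f b) ∧ f 1 = 1

/-- `a ↦ a_{1(-1)} a_{2(-1)} ⊗ a_{1(0)} ⊗ a_{2(0)}`, the right hand side of the
comodule coalgebra condition. -/
def comodCoalgRHS (A H : Type*) [Ring A] [Algebra k A] [Ring H] [Algebra k H]
    (ΔA : A →ₗ[k] A ⊗[k] A) (ρ : A →ₗ[k] H ⊗[k] A) :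
    A →ₗ[k] H ⊗[k] (A ⊗[k] A) :=
  (LinearMap.mul' k (H ⊗[k] (A ⊗[k] A))).comp
    ((TensorProduct.map
        ((TensorProduct.map (LinearMap.id : H →ₗ[k] H) (ι₁ k A A)).comp ρ)
        ((TensorProduct.map (LinearMap.id : H →ₗ[k] H) (ι₂ k A A)).comp ρ)).comp ΔA)

/-- The two conditions making a left `H`-comodule `(A, ρ)` a comodule coalgebra:
`a_{(-1)} ⊗ Δ(a_{(0)}) = a_{1(-1)} a_{2(-1)} ⊗ a_{1(0)} ⊗ a_{2(0)}` and
`a_{(-1)} ε(a_{(0)}) = ε(a) 1`. -/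
def IsComodCoalg (A H : Type*) [Ring A] [Algebra k A] [Ring H] [Algebra k H]
    (ΔA : A →ₗ[k] A ⊗[k] A) (εA : A →ₗ[k] k) (ρ : A →ₗ[k] H ⊗[k] A) : Prop :=
  (∀ a : A,
    TensorProduct.map (LinearMap.id : H →ₗ[k] H) ΔA (ρ a)
      = comodCoalgRHS k A H ΔA ρ a) ∧
  (∀ a : A,
    TensorProduct.rid k H (TensorProduct.map (LinearMap.id : H →ₗ[k] H) εA (ρ a))
      = algebraMap k H (εA a))

/-- `a ↦ a_{1(-1)} a_{2(-1)[0]} ⊗ a_{1(0)} a_{2(-1)[1]} ⊗ a_{2(0)}`, the right hand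
side of (HM2). -/
def HM2RHS (A H : Type*) [Ring A] [Algebra k A] [Ring H] [Algebra k H]
    (ΔA : A →ₗ[k] A ⊗[k] A) (ρ : A →ₗ[k] H ⊗[k] A) (φ : H →ₗ[k] H ⊗[k] A) :
    A →ₗ[k] H ⊗[k] (A ⊗[k] A) :=
  (LinearMap.mul' k (H ⊗[k] (A ⊗[k] A))).comp
    ((TensorProduct.map
        ((TensorProduct.map (LinearMap.id : H →ₗ[k] H) (ι₁ k A A)).comp ρ)
        ((TensorProduct.assoc k H A A).toLinearMap.comp
          ((TensorProduct.map φ (LinearMap.id : A →ₗ[k] A)).comp ρ))).comp ΔA)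

/-- `h ↦ h_{1[0]} ⊗ h_{1[1](-1)} h_{2[0]} ⊗ h_{1[1](0)} h_{2[1]}`, the right hand
side of (HM3). -/
def HM3RHS (A H : Type*) [Ring A] [Algebra k A] [Ring H] [Algebra k H]
    (ΔH : H →ₗ[k] H ⊗[k] H) (ρ : A →ₗ[k] H ⊗[k] A) (φ : H →ₗ[k] H ⊗[k] A) :
    H →ₗ[k] H ⊗[k] (H ⊗[k] A) :=
  (LinearMap.mul' k (H ⊗[k] (H ⊗[k] A))).comp
    ((TensorProduct.map
        ((TensorProduct.map (LinearMap.id : H →ₗ[k] H) ρ).comp φ)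
        ((ι₂ k H (H ⊗[k] A)).comp φ)).comp ΔH)

/-- A Hopf matched pair `(A, H)` (Definition 3.1): `ρ` makes `A` a left
`H`-comodule algebra, `φ` makes `H` a right `A`-comodule algebra, and the
compatibility conditions (HM1)–(HM4) hold. -/
def IsHopfMatchedPair (A H : Type*) [Ring A] [Algebra k A] [Ring H] [Algebra k H]
    (ΔA : A →ₗ[k] A ⊗[k] A) (εA : A →ₗ[k] k)
    (ΔH : H →ₗ[k] H ⊗[k] H) (εH : H →ₗ[k] k)
    (ρ : A →ₗ[k] H ⊗[k] A) (φ : H →ₗ[k] H ⊗[k] A) : Prop :=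
  LeftCoaction k A H ΔH εH ρ ∧
  IsAlgebraMorphism k A (H ⊗[k] A) ρ ∧
  RightCoaction k A H ΔA εA φ ∧
  IsAlgebraMorphism k H (H ⊗[k] A) φ ∧
  -- (HM1)
  (∀ a : A,
    TensorProduct.rid k H (TensorProduct.map (LinearMap.id : H →ₗ[k] H) εA (ρ a))
      = algebraMap k H (εA a)) ∧
  (∀ h : H,
    TensorProduct.lid k A (TensorProduct.map εH (LinearMap.id : A →ₗ[k] A) (φ h))
      = algebraMap k A (εH h)) ∧
  -- (HM2)
  (∀ a : A,
    TensorProduct.map (LinearMap.id : H →ₗ[k] H) ΔA (ρ a) = HM2RHS k A H ΔA ρ φ a) ∧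
  -- (HM3)
  (∀ h : H,
    TensorProduct.assoc k H H A
        (TensorProduct.map ΔH (LinearMap.id : A →ₗ[k] A) (φ h))
      = HM3RHS k A H ΔH ρ φ h) ∧
  -- (HM4)
  (∀ (a : A) (h : H), φ h * ρ a = ρ a * φ h)

/-- Equation (3.2): `Δ(a) = a_{1'} T(a_{2'(-1)}) ⊗ a_{2'(0)}`. -/
def Δfromρ (A : Type*) [Ring A] [Algebra k A] (Δ' : A →ₗ[k] A ⊗[k] A)
    (T : A →ₗ[k] A) (ρ : A →ₗ[k] A ⊗[k] A) : A →ₗ[k] A ⊗[k] A :=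
  (LinearMap.mul' k (A ⊗[k] A)).comp
    ((TensorProduct.map (ι₁ k A A)
        ((TensorProduct.map T (LinearMap.id : A →ₗ[k] A)).comp ρ)).comp Δ')

/-- Equation (3.3): `S(a) = a_{(-1)} T(a_{(0)})`. -/
def Sfromρ (A : Type*) [Ring A] [Algebra k A] (T : A →ₗ[k] A)
    (ρ : A →ₗ[k] A ⊗[k] A) : A →ₗ[k] A :=
  (LinearMap.mul' k A).comp
    ((TensorProduct.map (LinearMap.id : A →ₗ[k] A) T).comp ρ)

/-- The comultiplication `Δ_R(h) = R · Δ(h) · R⁻¹` obtained by conjugating `Δ` with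
an invertible element `R ∈ H ⊗ H`. -/
def conjComul (H : Type*) [Ring H] [Algebra k H] (R Rinv : H ⊗[k] H)
    (Δ : H →ₗ[k] H ⊗[k] H) : H →ₗ[k] H ⊗[k] H :=
  (LinearMap.mulLeft k R).comp ((LinearMap.mulRight k Rinv).comp Δ)

/-- The braiding candidate `c(x ⊗ y) = x_{(-1)} y_{[0]} ⊗ x_{(0)} y_{[1]}` of
Proposition 2.9, i.e. `c = mult ∘ (ρ ⊗ φ)`. -/
def cmap (A : Type*) [Ring A] [Algebra k A] (Δ Δ' : A →ₗ[k] A ⊗[k] A)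
    (S T : A →ₗ[k] A) : A ⊗[k] A →ₗ[k] A ⊗[k] A :=
  (LinearMap.mul' k (A ⊗[k] A)).comp
    (TensorProduct.map (ρmap k A Δ Δ' S) (φmap k A Δ Δ' S T))

/-- `γ(x ⊗ y) = x y_{(-1)} ⊗ y_{(0)}` for a coaction `ρ(y) = y_{(-1)} ⊗ y_{(0)}`. -/
def γmap (A : Type*) [Ring A] [Algebra k A] (ρ : A →ₗ[k] A ⊗[k] A) :
    A ⊗[k] A →ₗ[k] A ⊗[k] A :=
  (LinearMap.mul' k (A ⊗[k] A)).comp (TensorProduct.map (ι₁ k A A) ρ)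

/-- `σ(x ⊗ y) = y_2 ⊗ x S(y_1) y_3`. -/
def σmap (A : Type*) [Ring A] [Algebra k A] (Δ : A →ₗ[k] A ⊗[k] A)
    (S : A →ₗ[k] A) : A ⊗[k] A →ₗ[k] A ⊗[k] A :=
  (mul₄ k (A ⊗[k] A)).comp
    ((TensorProduct.map (ι₂ k A A)
        (TensorProduct.map ((ι₂ k A A).comp S)
          (TensorProduct.map (ι₁ k A A) (ι₂ k A A)))).comp
      (TensorProduct.map (LinearMap.id : A →ₗ[k] A)
        ((TensorProduct.map (LinearMap.id : A →ₗ[k] A) Δ).comp Δ)))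

/-- The usual tensor product comultiplication `Δ̂` on `A ⊗ H`:
`a ⊗ h ↦ (a_1 ⊗ h_1) ⊗ (a_2 ⊗ h_2)`. -/
def hatΔ (A H : Type*) [Ring A] [Algebra k A] [Ring H] [Algebra k H]
    (ΔA : A →ₗ[k] A ⊗[k] A) (ΔH : H →ₗ[k] H ⊗[k] H) :
    A ⊗[k] H →ₗ[k] (A ⊗[k] H) ⊗[k] (A ⊗[k] H) :=
  (TensorProduct.tensorTensorTensorComm k A A H H).toLinearMap.comp
    (TensorProduct.map ΔA ΔH)

/-- The bicrossed coproduct comultiplication on `A ⊗ H`: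
`Δ̃(a ⊗ h) = a_1 ⊗ a_{2(-1)} h_{1[0]} ⊗ a_{2(0)} h_{1[1]} ⊗ h_2`. -/
def bicrossΔ (A H : Type*) [Ring A] [Algebra k A] [Ring H] [Algebra k H]
    (ΔA : A →ₗ[k] A ⊗[k] A) (ΔH : H →ₗ[k] H ⊗[k] H)
    (ρ : A →ₗ[k] H ⊗[k] A) (φ : H →ₗ[k] H ⊗[k] A) :
    A ⊗[k] H →ₗ[k] (A ⊗[k] H) ⊗[k] (A ⊗[k] H) :=
  (LinearMap.mul' k ((A ⊗[k] H) ⊗[k] (A ⊗[k] H))).comp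
    (TensorProduct.map
      -- a ↦ (a_1 ⊗ a_{2(-1)}) ⊗ (a_{2(0)} ⊗ 1)
      ((TensorProduct.map (LinearMap.id : A ⊗[k] H →ₗ[k] A ⊗[k] H) (ι₁ k A H)).comp
        ((TensorProduct.assoc k A H A).symm.toLinearMap.comp
          ((TensorProduct.map (LinearMap.id : A →ₗ[k] A) ρ).comp ΔA)))
      -- h ↦ (1 ⊗ h_{1[0]}) ⊗ (h_{1[1]} ⊗ h_2)
      ((TensorProduct.map (ι₂ k A H) (LinearMap.id : A ⊗[k] H →ₗ[k] A ⊗[k] H)).comp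
        ((TensorProduct.assoc k H A H).toLinearMap.comp
          ((TensorProduct.map φ (LinearMap.id : H →ₗ[k] H)).comp ΔH))))

/-- The antipode of the bicrossed coproduct:
`S̃(a ⊗ h) = S_A(h_{[1]}) S_A(a_{(0)}) ⊗ S_H(h_{[0]}) S_H(a_{(-1)})`. -/
def bicrossS (A H : Type*) [Ring A] [Algebra k A] [Ring H] [Algebra k H]
    (SA : A →ₗ[k] A) (SH : H →ₗ[k] H)
    (ρ : A →ₗ[k] H ⊗[k] A) (φ : H →ₗ[k] H ⊗[k] A) :
    A ⊗[k] H →ₗ[k] A ⊗[k] H :=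
  (LinearMap.mul' k (A ⊗[k] H)).comp
    ((TensorProduct.map
        ((TensorProduct.map SA SH).comp ((TensorProduct.comm k H A).toLinearMap.comp φ))
        ((TensorProduct.map SA SH).comp ((TensorProduct.comm k H A).toLinearMap.comp ρ))).comp
      (TensorProduct.comm k A H).toLinearMap)

/-- The left hand side `h_{[0]} ⊗ h_{[1]1} ⊗ h_{[1]2}` of equation (4.1), where the
`A`-leg is comultiplied with `Δ'`. -/
def eq41LHS (A H : Type*) [Ring A] [Algebra k A] [Ring H] [Algebra k H]
    (Δ'A : A →ₗ[k] A ⊗[k] A) (φ : H →ₗ[k] H ⊗[k] A) :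
    H →ₗ[k] H ⊗[k] (A ⊗[k] A) :=
  (TensorProduct.map (LinearMap.id : H →ₗ[k] H) Δ'A).comp φ

/-- The right hand side `h_{1[0]} S(h_2) h_{3[0]} ⊗ h_{1[1]} ⊗ h_{3[1]}` of
equation (4.1). -/
def eq41RHS (A H : Type*) [Ring A] [Algebra k A] [Ring H] [Algebra k H]
    (ΔH : H →ₗ[k] H ⊗[k] H) (SH : H →ₗ[k] H) (φ : H →ₗ[k] H ⊗[k] A) :
    H →ₗ[k] H ⊗[k] (A ⊗[k] A) :=
  (mul₃ k (H ⊗[k] (A ⊗[k] A))).comp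
    ((TensorProduct.map
        ((TensorProduct.map (LinearMap.id : H →ₗ[k] H) (ι₁ k A A)).comp φ)
        (TensorProduct.map ((ι₁ k H (A ⊗[k] A)).comp SH)
          ((TensorProduct.map (LinearMap.id : H →ₗ[k] H) (ι₂ k A A)).comp φ))).comp
      ((TensorProduct.map (LinearMap.id : H →ₗ[k] H) ΔH).comp ΔH))

/-- `x ↦ x_{11'} S(x_2) ⊗ x_{12'} ⊗ 1 ∈ H ⊗ (H ⊗ A)`, an auxiliary map for
equations (4.2) and (4.3). -/
def LHmap (A H : Type*) [Ring A] [Algebra k A] [Ring H] [Algebra k H]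
    (ΔH Δ'H : H →ₗ[k] H ⊗[k] H) (SH : H →ₗ[k] H) :
    H →ₗ[k] H ⊗[k] (H ⊗[k] A) :=
  (LinearMap.mul' k (H ⊗[k] (H ⊗[k] A))).comp
    ((TensorProduct.map
        ((TensorProduct.map (LinearMap.id : H →ₗ[k] H) (ι₁ k H A)).comp Δ'H)
        ((ι₁ k H (H ⊗[k] A)).comp SH)).comp ΔH)

/-- The right hand side
`a_{(-1)11'} S(a_{(-1)2}) a_{(0)(-1)'} ⊗ a_{(-1)12'} ⊗ a_{(0)(0)'}` of
equation (4.2). -/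
def eq42RHS (A H : Type*) [Ring A] [Algebra k A] [Ring H] [Algebra k H]
    (ΔH Δ'H : H →ₗ[k] H ⊗[k] H) (SH : H →ₗ[k] H)
    (ρ ρ' : A →ₗ[k] H ⊗[k] A) :
    A →ₗ[k] H ⊗[k] (H ⊗[k] A) :=
  (LinearMap.mul' k (H ⊗[k] (H ⊗[k] A))).comp
    ((TensorProduct.map (LHmap k A H ΔH Δ'H SH)
        ((TensorProduct.map (LinearMap.id : H →ₗ[k] H) (ι₂ k H A)).comp ρ')).comp ρ)

/-- The right hand side
`h_{1[0]11'} S(h_{1[0]2}) h_{1[1](-1)'} h_2 ⊗ h_{1[0]12'} ⊗ h_{1[1](0)'}` of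
equation (4.3). -/
def eq43RHS (A H : Type*) [Ring A] [Algebra k A] [Ring H] [Algebra k H]
    (ΔH Δ'H : H →ₗ[k] H ⊗[k] H) (SH : H →ₗ[k] H)
    (ρ' : A →ₗ[k] H ⊗[k] A) (φ : H →ₗ[k] H ⊗[k] A) :
    H →ₗ[k] H ⊗[k] (H ⊗[k] A) :=
  (LinearMap.mul' k (H ⊗[k] (H ⊗[k] A))).comp
    ((TensorProduct.map
        ((LinearMap.mul' k (H ⊗[k] (H ⊗[k] A))).comp
          ((TensorProduct.map (LHmap k A H ΔH Δ'H SH)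
              ((TensorProduct.map (LinearMap.id : H →ₗ[k] H) (ι₂ k H A)).comp ρ')).comp φ))
        (ι₁ k H (H ⊗[k] A))).comp ΔH)

/- For a commutative Hopf algebra `A`, the algebra maps `A → C` form a group under convolution,
functorially in `C`, and every algebra map `A → A ⊗ A` induces a natural binary operation on these
points. It is recovered from the operation by evaluating at the universal pair of points
`(includeLeft, includeRight)` of `C = A ⊗ A`, so identities between such maps may be checked on
points. There, (HM2) and (3.1) say that the operations `r` and `l` induced by `ρ` and `φ` satisfy
`r x (y * z) = r x y * r (l x y) z` and `x * y = r x y * l x y`, and a Hopf brace becomes a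
skew brace. The two reconstructions are then `r x y = -x + x * y`, where `x + y = x * r x⁻¹ y` and
`-x = r x x⁻¹`, and conversely `x + y = x * (-x⁻¹ + x⁻¹ * y)`. -/

section Points

open Algebra.TensorProduct

variable {R A C D : Type*} [CommSemiring R] [Semiring A] [Algebra R A]
  [CommSemiring C] [Algebra R C] [CommSemiring D] [Algebra R D]

/-- The binary operation induced by an algebra map `f : A → A ⊗ A` on the `C`-points
`A →ₐ[R] C` of `Spec A`, namely `(x, y) ↦ (a ↦ x a₁ * y a₂)` where `f a = a₁ ⊗ a₂`.
Comultiplications and coactions are both encoded in this way. -/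
def pointOp (f : A →ₐ[R] A ⊗[R] A) (x y : A →ₐ[R] C) : A →ₐ[R] C :=
  (productMap x y).comp f

theorem toLinearMap_pointOp (f : A →ₐ[R] A ⊗[R] A) (x y : A →ₐ[R] C) :
    (pointOp f x y).toLinearMap = LinearMap.mul' R C ∘ₗ
      TensorProduct.map x.toLinearMap y.toLinearMap ∘ₗ f.toLinearMap := by
  rw [pointOp, productMap_eq_comp_map]
  rfl

theorem comp_productMap {B : Type*} [Semiring B] [Algebra R B]
    (h : C →ₐ[R] D) (x : A →ₐ[R] C) (y : B →ₐ[R] C) :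
    h.comp (productMap x y) = productMap (h.comp x) (h.comp y) := by
  ext <;> simp

theorem comp_pointOp (h : C →ₐ[R] D) (f : A →ₐ[R] A ⊗[R] A) (x y : A →ₐ[R] C) :
    h.comp (pointOp f x y) = pointOp f (h.comp x) (h.comp y) := by
  rw [pointOp, ← AlgHom.comp_assoc, comp_productMap, pointOp]

theorem productMap_comp_map_comp {A₁ A₂ : Type*} [Semiring A₁] [Algebra R A₁] [Semiring A₂]
    [Algebra R A₂] (x : A₁ →ₐ[R] C) (y : A₂ →ₐ[R] C) (u : A →ₐ[R] A₁) (v : A →ₐ[R] A₂)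
    (f : A →ₐ[R] A ⊗[R] A) :
    (productMap x y).comp ((Algebra.TensorProduct.map u v).comp f)
      = pointOp f (x.comp u) (y.comp v) := by
  rw [pointOp, ← AlgHom.comp_assoc]
  congr 1
  ext <;> simp

theorem productMap_comp_assoc {A₁ A₂ A₃ : Type*} [Semiring A₁] [Algebra R A₁] [Semiring A₂]
    [Algebra R A₂] [Semiring A₃] [Algebra R A₃]
    (x : A₁ →ₐ[R] C) (y : A₂ →ₐ[R] C) (z : A₃ →ₐ[R] C) :
    (productMap x (productMap y z)).comp
        (Algebra.TensorProduct.assoc R R R A₁ A₂ A₃).toAlgHom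
      = productMap (productMap x y) z := by
  ext <;> simp [Algebra.TensorProduct.one_def]

theorem productMap_includeLeft_includeRight :
    productMap (includeLeft : C →ₐ[R] C ⊗[R] D) includeRight = AlgHom.id R (C ⊗[R] D) := by
  ext <;> simp

theorem pointOp_includeLeft_includeRight (f : C →ₐ[R] C ⊗[R] C) :
    pointOp f includeLeft includeRight = f := by
  rw [pointOp, productMap_includeLeft_includeRight, AlgHom.id_comp]

theorem pointOp_pointOp_includeLeft_comp {A : Type*} [CommSemiring A] [Algebra R A]
    (f g : A →ₐ[R] A ⊗[R] A) (S : A →ₐ[R] A) (x y : A →ₐ[R] C) :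
    pointOp (pointOp f (includeLeft.comp S) g) x y = pointOp f (x.comp S) (pointOp g x y) := by
  rw [pointOp, comp_pointOp, ← AlgHom.comp_assoc, productMap_left, ← pointOp]

theorem pointOp_pointOp_includeLeft {A : Type*} [CommSemiring A] [Algebra R A]
    (f g : A →ₐ[R] A ⊗[R] A) (T : A →ₐ[R] A) (x y : A →ₐ[R] C) :
    pointOp (pointOp f includeLeft (pointOp g (includeLeft.comp T) includeRight)) x y
      = pointOp f x (pointOp g (x.comp T) y) := by
  rw [pointOp, comp_pointOp, comp_pointOp, productMap_left, productMap_right,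
    ← AlgHom.comp_assoc, productMap_left]

end Points

open WithConv in
theorem toConv_comp_antipodeAlgHom_mul_toConv {R A C : Type*} [CommSemiring R] [CommSemiring A]
    [HopfAlgebra R A] [CommSemiring C] [Algebra R C] (x : A →ₐ[R] C) :
    toConv (x.comp (HopfAlgebra.antipodeAlgHom R A)) * toConv x = 1 := by
  have h := AlgHom.comp_convMul_distrib x (toConv (HopfAlgebra.antipodeAlgHom R A))
    (toConv (AlgHom.id R A))
  rw [AlgHom.antipode_id_cancel] at h
  refine (congrArg toConv h.symm).trans (WithConv.ext (AlgHom.ext fun a => ?_))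
  exact x.commutes _

section PointGroup

variable {k A : Type*} [Field k]

/-- An algebra morphism in the unbundled sense of `IsAlgebraMorphism`, as an `AlgHom`. -/
def IsAlgebraMorphism.toAlgHom {M N : Type*} [Ring M] [Algebra k M] [Ring N] [Algebra k N]
    {f : M →ₗ[k] N} (hf : IsAlgebraMorphism k M N f) : M →ₐ[k] N :=
  .ofLinearMap f hf.2 hf.1

namespace HopfStruct

/-- A `HopfStruct` as an instance of Mathlib's `HopfAlgebra`. -/
abbrev toHopfAlgebra [Ring A] [Algebra k A] (B : HopfStruct k A) : HopfAlgebra k A where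
  comul := B.Δ
  counit := B.ε
  coassoc := LinearMap.ext fun a => (B.coassoc a).symm
  rTensor_counit_comp_comul := LinearMap.ext fun a =>
    (TensorProduct.lid k A).injective <| (B.counit_left a).trans (by simp)
  lTensor_counit_comp_comul := LinearMap.ext fun a =>
    (TensorProduct.rid k A).injective <| (B.counit_right a).trans (by simp)
  counit_one := B.counit_one
  mul_compr₂_counit := LinearMap.ext₂ B.counit_mul
  comul_one := B.comul_one
  mul_compr₂_comul := LinearMap.ext₂ B.comul_mul
  antipode := B.S
  mul_antipode_rTensor_comul := LinearMap.ext B.antipode_left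
  mul_antipode_lTensor_comul := LinearMap.ext B.antipode_right

/-- The comultiplication of a `HopfStruct` as an `AlgHom`. -/
def comulAlgHom [Ring A] [Algebra k A] (B : HopfStruct k A) : A →ₐ[k] A ⊗[k] A :=
  .ofLinearMap B.Δ B.comul_one B.comul_mul

variable [CommRing A] [Algebra k A] (B : HopfStruct k A)
  (C : Type*) [CommSemiring C] [Algebra k C]

/-- The antipode of a commutative `HopfStruct` as an `AlgHom`. -/
def antipodeAlgHom : A →ₐ[k] A :=
  letI := B.toHopfAlgebra
  HopfAlgebra.antipodeAlgHom k A

/-- The group of `C`-points of a commutative Hopf algebra, under convolution. -/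
abbrev pointGroup : Group (A →ₐ[k] C) :=
  letI := B.toHopfAlgebra
  letI : Inv (A →ₐ[k] C) := ⟨fun x => x.comp (HopfAlgebra.antipodeAlgHom k A)⟩
  { (WithConv.equiv (A →ₐ[k] C)).symm.monoid with
    inv_mul_cancel x := congrArg WithConv.ofConv (toConv_comp_antipodeAlgHom_mul_toConv x) }

/-- The group `pointGroup` in additive notation, so that the two group structures attached to
a Hopf brace can be told apart. -/
abbrev pointAddGroup : AddGroup (A →ₐ[k] C) :=
  letI := B.pointGroup C
  inferInstanceAs (AddGroup (Additive (A →ₐ[k] C)))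

variable {C}

theorem pointOp_comulAlgHom_eq_mul (x y : A →ₐ[k] C) :
    letI := B.pointGroup C
    pointOp B.comulAlgHom x y = x * y := by
  rw [pointOp, Algebra.TensorProduct.productMap_eq_comp_map]
  rfl

theorem comp_antipodeAlgHom_eq_inv (x : A →ₐ[k] C) :
    letI := B.pointGroup C
    x.comp B.antipodeAlgHom = x⁻¹ :=
  rfl

theorem pointOp_comulAlgHom_eq_add (x y : A →ₐ[k] C) :
    letI := B.pointAddGroup C
    pointOp B.comulAlgHom x y = x + y :=
  B.pointOp_comulAlgHom_eq_mul x y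

theorem comp_antipodeAlgHom_eq_neg (x : A →ₐ[k] C) :
    letI := B.pointAddGroup C
    x.comp B.antipodeAlgHom = -x :=
  rfl

end HopfStruct

end PointGroup

section SweedlerFormulas

open Algebra.TensorProduct

variable {k A C : Type*} [Field k] [CommRing A] [Algebra k A] [CommSemiring C] [Algebra k C]

theorem ρmap_eq_pointOp (Δ Δ' : A →ₐ[k] A ⊗[k] A) (S : A →ₐ[k] A) :
    ρmap k A Δ.toLinearMap Δ'.toLinearMap S.toLinearMap
      = (pointOp Δ (includeLeft.comp S) Δ').toLinearMap := by
  rw [toLinearMap_pointOp]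
  rfl

theorem Sfromρ_eq_pointOp (T : A →ₐ[k] A) (ρ : A →ₐ[k] A ⊗[k] A) :
    Sfromρ k A T.toLinearMap ρ.toLinearMap = (pointOp ρ (AlgHom.id k A) T).toLinearMap := by
  rw [toLinearMap_pointOp]
  rfl

theorem map_id_comp_eq_pointOp (T : A →ₐ[k] A) (ρ : A →ₐ[k] A ⊗[k] A) :
    (Algebra.TensorProduct.map T (AlgHom.id k A)).comp ρ
      = pointOp ρ (includeLeft.comp T) includeRight := by
  rw [← AlgHom.id_comp (AlgHom.comp _ ρ), ← productMap_includeLeft_includeRight,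
    productMap_comp_map_comp, AlgHom.comp_id]

theorem Δfromρ_eq_pointOp (Δ' : A →ₐ[k] A ⊗[k] A) (T : A →ₐ[k] A) (ρ : A →ₐ[k] A ⊗[k] A) :
    Δfromρ k A Δ'.toLinearMap T.toLinearMap ρ.toLinearMap
      = (pointOp Δ' includeLeft (pointOp ρ (includeLeft.comp T) includeRight)).toLinearMap := by
  rw [← map_id_comp_eq_pointOp, toLinearMap_pointOp]
  rfl

theorem HM2RHS_eq_pointOp (Δ' ρ φ : A →ₐ[k] A ⊗[k] A) :
    HM2RHS k A A Δ'.toLinearMap ρ.toLinearMap φ.toLinearMap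
      = (pointOp Δ' ((Algebra.TensorProduct.map (AlgHom.id k A) includeLeft).comp ρ)
          ((Algebra.TensorProduct.assoc k k k A A A).toAlgHom.comp
            ((Algebra.TensorProduct.map φ (AlgHom.id k A)).comp ρ))).toLinearMap := by
  rw [toLinearMap_pointOp]
  rfl

theorem braceRHS_eq_pointOp (Δ Δ' : A →ₐ[k] A ⊗[k] A) (S : A →ₐ[k] A) :
    braceRHS k A Δ.toLinearMap Δ'.toLinearMap S.toLinearMap
      = (pointOp Δ ((Algebra.TensorProduct.map (AlgHom.id k A) includeLeft).comp Δ')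
          (pointOp Δ ((includeLeft : A →ₐ[k] A ⊗[k] (A ⊗[k] A)).comp S)
            ((Algebra.TensorProduct.map (AlgHom.id k A) includeRight).comp Δ'))).toLinearMap := by
  rw [toLinearMap_pointOp, toLinearMap_pointOp]
  ext a
  simp only [braceRHS, mul₃, LinearMap.comp_apply, TensorProduct.map_map, LinearMap.id_comp,
    LinearMap.comp_id]
  rfl

theorem pointOp_of_HM2 {Δ' ρ φ : A →ₐ[k] A ⊗[k] A}
    (h : ∀ a, TensorProduct.map LinearMap.id Δ'.toLinearMap (ρ a)
      = HM2RHS k A A Δ'.toLinearMap ρ.toLinearMap φ.toLinearMap a) (x y z : A →ₐ[k] C) :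
    pointOp ρ x (pointOp Δ' y z) = pointOp Δ' (pointOp ρ x y) (pointOp ρ (pointOp φ x y) z) := by
  have hm : (Algebra.TensorProduct.map (AlgHom.id k A) Δ').comp ρ
      = pointOp Δ' ((Algebra.TensorProduct.map (AlgHom.id k A) includeLeft).comp ρ)
          ((Algebra.TensorProduct.assoc k k k A A A).toAlgHom.comp
            ((Algebra.TensorProduct.map φ (AlgHom.id k A)).comp ρ)) :=
    AlgHom.toLinearMap_injective <| (LinearMap.ext h).trans (HM2RHS_eq_pointOp Δ' ρ φ)
  have hxyz := congrArg (productMap x (productMap y z)).comp hm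
  rwa [comp_pointOp, ← AlgHom.comp_assoc (productMap _ _) (AlgEquiv.toAlgHom _),
    productMap_comp_assoc, productMap_comp_map_comp, productMap_comp_map_comp,
    productMap_comp_map_comp, productMap_left, AlgHom.comp_id, AlgHom.comp_id] at hxyz

theorem pointOp_of_brace {Δ Δ' : A →ₐ[k] A ⊗[k] A} {S : A →ₐ[k] A}
    (h : ∀ a, braceLHS k A Δ.toLinearMap Δ'.toLinearMap a
      = braceRHS k A Δ.toLinearMap Δ'.toLinearMap S.toLinearMap a) (x y z : A →ₐ[k] C) :
    pointOp Δ' x (pointOp Δ y z)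
      = pointOp Δ (pointOp Δ' x y) (pointOp Δ (x.comp S) (pointOp Δ' x z)) := by
  have hb : (Algebra.TensorProduct.map (AlgHom.id k A) Δ).comp Δ'
      = pointOp Δ ((Algebra.TensorProduct.map (AlgHom.id k A) includeLeft).comp Δ')
          (pointOp Δ ((includeLeft : A →ₐ[k] A ⊗[k] (A ⊗[k] A)).comp S)
            ((Algebra.TensorProduct.map (AlgHom.id k A) includeRight).comp Δ')) :=
    AlgHom.toLinearMap_injective <| (LinearMap.ext h).trans (braceRHS_eq_pointOp Δ Δ' S)
  have hxyz := congrArg (productMap x (productMap y z)).comp hb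
  rwa [comp_pointOp, comp_pointOp, ← AlgHom.comp_assoc _ includeLeft S, productMap_left,
    productMap_comp_map_comp, productMap_comp_map_comp, productMap_comp_map_comp, productMap_left,
    productMap_right, AlgHom.comp_id] at hxyz

theorem pointOp_of_eq_mul'_map {Δ' ρ φ : A →ₐ[k] A ⊗[k] A}
    (h : ∀ a, Δ' a
      = LinearMap.mul' k (A ⊗[k] A) (TensorProduct.map ρ.toLinearMap φ.toLinearMap (Δ' a)))
    (x y : A →ₐ[k] C) : pointOp Δ' x y = pointOp Δ' (pointOp ρ x y) (pointOp φ x y) := by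
  have hΔ' : Δ' = pointOp Δ' ρ φ :=
    AlgHom.toLinearMap_injective <| (LinearMap.ext h).trans (toLinearMap_pointOp Δ' ρ φ).symm
  have hxy := congrArg (productMap x y).comp hΔ'
  rwa [comp_pointOp] at hxy

end SweedlerFormulas

theorem leftAction_eq_of_matchedPair {G : Type*} [Group G] (r l : G → G → G)
    (hr : ∀ x y z, r x (y * z) = r x y * r (l x y) z) (hc : ∀ x y, x * y = r x y * l x y)
    (x y : G) : r x y = r x x⁻¹ * r (r x x⁻¹)⁻¹ (x * y) := by
  have hl : (r x x⁻¹)⁻¹ = l x x⁻¹ := inv_eq_of_mul_eq_one_right (by rw [← hc, mul_inv_cancel])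
  rw [hl, ← hr, inv_mul_cancel_left]

theorem add_eq_mul_of_skewBrace {G : Type*} [AddGroup G] [Group G]
    (hb : ∀ x y z : G, x * (y + z) = x * y + (-x + x * z)) (x y : G) :
    x + y = x * (-x⁻¹ + x⁻¹ * y) := by
  have mul_zero_eq (a : G) : a * 0 = a := by
    have h := hb a 0 0
    rw [add_zero, left_eq_add, neg_add_eq_zero] at h
    exact h.symm
  have zero_eq_one : (0 : G) = 1 := (one_mul 0).symm.trans (mul_zero_eq 1)
  have mul_neg_inv : x * -x⁻¹ + -x = x := by
    have h := hb x (-x⁻¹) x⁻¹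
    rw [neg_add_cancel, mul_zero_eq, mul_inv_cancel, ← zero_eq_one, add_zero] at h
    exact h.symm
  rw [hb, mul_inv_cancel_left, ← add_assoc, mul_neg_inv]

section Reconstruction

open Algebra.TensorProduct

variable {k A : Type*} [Field k] [CommRing A] [Algebra k A]

theorem coaction_eq_ρmap (B : HopfStruct k A) {ρ φ : A →ₗ[k] A ⊗[k] A}
    (hρ : IsAlgebraMorphism k A (A ⊗[k] A) ρ) (hφ : IsAlgebraMorphism k A (A ⊗[k] A) φ)
    (hm : ∀ a, TensorProduct.map LinearMap.id B.Δ (ρ a) = HM2RHS k A A B.Δ ρ φ a)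
    (hc : ∀ a, B.Δ a = LinearMap.mul' k (A ⊗[k] A) (TensorProduct.map ρ φ (B.Δ a))) :
    ρ = ρmap k A (Δfromρ k A B.Δ B.S ρ) B.Δ (Sfromρ k A B.S ρ) := by
  let _ := B.pointGroup (A ⊗[k] A)
  let Δ' := B.comulAlgHom
  let T := B.antipodeAlgHom
  let r := hρ.toAlgHom
  let Δ : A →ₐ[k] A ⊗[k] A :=
    pointOp Δ' includeLeft (pointOp r (includeLeft.comp T) includeRight)
  have hpoints : r = pointOp Δ (includeLeft.comp (pointOp r (AlgHom.id k A) T)) Δ' := by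
    rw [comp_pointOp, AlgHom.comp_id, pointOp_pointOp_includeLeft]
    have h := leftAction_eq_of_matchedPair (pointOp r) (pointOp hφ.toAlgHom)
      (fun x y z : A →ₐ[k] A ⊗[k] A => by
        simpa only [Δ', B.pointOp_comulAlgHom_eq_mul] using pointOp_of_HM2 (Δ' := Δ') hm x y z)
      (fun x y => by
        simpa only [Δ', B.pointOp_comulAlgHom_eq_mul] using
          pointOp_of_eq_mul'_map (Δ' := Δ') (ρ := r) (φ := hφ.toAlgHom) hc x y)
      includeLeft includeRight
    simpa only [Δ', ← B.comp_antipodeAlgHom_eq_inv, ← B.pointOp_comulAlgHom_eq_mul,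
      pointOp_includeLeft_includeRight] using h
  calc ρ = r.toLinearMap := rfl
    _ = ρmap k A Δ.toLinearMap Δ'.toLinearMap (pointOp r (AlgHom.id k A) T).toLinearMap := by
      rw [ρmap_eq_pointOp, ← hpoints]
    _ = ρmap k A (Δfromρ k A B.Δ B.S ρ) B.Δ (Sfromρ k A B.S ρ) := by
      rw [← Δfromρ_eq_pointOp, ← Sfromρ_eq_pointOp]
      rfl

theorem fst_Δ_eq_Δfromρ_ρmap (HB : HopfBrace k A) :
    HB.fst.Δ = Δfromρ k A HB.snd.Δ HB.snd.S (ρmap k A HB.fst.Δ HB.snd.Δ HB.fst.S) := by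
  let _ := HB.fst.pointAddGroup (A ⊗[k] A)
  let _ := HB.snd.pointGroup (A ⊗[k] A)
  let Δ := HB.fst.comulAlgHom
  let S := HB.fst.antipodeAlgHom
  let Δ' := HB.snd.comulAlgHom
  let T := HB.snd.antipodeAlgHom
  let ρ : A →ₐ[k] A ⊗[k] A := pointOp Δ (includeLeft.comp S) Δ'
  have hpoints : Δ = pointOp Δ' includeLeft (pointOp ρ (includeLeft.comp T) includeRight) := by
    have h := add_eq_mul_of_skewBrace
      (fun x y z : A →ₐ[k] A ⊗[k] A => by
        simpa only [Δ, Δ', S, HB.fst.pointOp_comulAlgHom_eq_add, HB.fst.comp_antipodeAlgHom_eq_neg,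
          HB.snd.pointOp_comulAlgHom_eq_mul] using
          pointOp_of_brace (Δ := Δ) (Δ' := Δ') (S := S) HB.compat x y z)
      includeLeft includeRight
    rw [pointOp_pointOp_includeLeft_comp]
    simpa only [← HB.fst.pointOp_comulAlgHom_eq_add, ← HB.fst.comp_antipodeAlgHom_eq_neg,
      ← HB.snd.comp_antipodeAlgHom_eq_inv, ← HB.snd.pointOp_comulAlgHom_eq_mul,
      pointOp_includeLeft_includeRight] using h
  calc HB.fst.Δ = Δ.toLinearMap := rfl
    _ = Δfromρ k A Δ'.toLinearMap T.toLinearMap ρ.toLinearMap := by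
      rw [Δfromρ_eq_pointOp, ← hpoints]
    _ = Δfromρ k A HB.snd.Δ HB.snd.S (ρmap k A HB.fst.Δ HB.snd.Δ HB.fst.S) := by
      rw [← ρmap_eq_pointOp]
      rfl

end Reconstruction

theorem matched_pair_brace_mutually_inverse_general {k : Type*} [Field k]
    {A : Type*} [Ring A] [Algebra k A] :
    (∀ (B : HopfStruct k A), (∀ x y : A, x * y = y * x) →
      ∀ (ρ φ : A →ₗ[k] A ⊗[k] A),
        IsAlgebraMorphism k A (A ⊗[k] A) ρ → IsAlgebraMorphism k A (A ⊗[k] A) φ →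
        (∀ a : A, TensorProduct.map LinearMap.id B.Δ (ρ a) = HM2RHS k A A B.Δ ρ φ a) →
        (∀ a : A,
          B.Δ a = LinearMap.mul' k (A ⊗[k] A) (TensorProduct.map ρ φ (B.Δ a))) →
        ∀ a : A,
          ρ a = ρmap k A (Δfromρ k A B.Δ B.S ρ) B.Δ (Sfromρ k A B.S ρ) a) ∧
    (∀ (HB : HopfBrace k A), (∀ x y : A, x * y = y * x) →
      ∀ a : A,
        HB.fst.Δ a
          = Δfromρ k A HB.snd.Δ HB.snd.S
              (ρmap k A HB.fst.Δ HB.snd.Δ HB.fst.S) a) := by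
  have exists_commRing (hcomm : ∀ x y : A, x * y = y * x) :
      ∃ C : CommRing A, C.toRing = ‹Ring A› := ⟨{ ‹Ring A› with mul_comm := hcomm }, rfl⟩
  constructor
  · intro B hcomm ρ φ hρ hφ hm hc
    obtain ⟨_, rfl⟩ := exists_commRing hcomm
    exact LinearMap.congr_fun (coaction_eq_ρmap B hρ hφ hm hc)
  · intro HB hcomm
    obtain ⟨_, rfl⟩ := exists_commRing hcomm
    exact LinearMap.congr_fun (fst_Δ_eq_Δfromρ_ρmap HB)

/-- the two constructions of Propositions 3.3 and 3.4 are
mutually inverse; cf. Theorem 3.5.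
(a) In the situation of Proposition 3.4 (a commutative Hopf algebra `(A, Δ', ε)`
with antipode `T`, a Hopf matched pair `(A, A)` with coactions `ρ`, `φ`
satisfying (3.1), and `Δ(a) = a_{1'} T(a_{2'(-1)}) ⊗ a_{2'(0)}`,
`S(a) = a_{(-1)} T(a_{(0)})`), the original coaction is recovered:
`ρ(a) = S(a_1) a_{21'} ⊗ a_{22'}`.
(b) Conversely, starting from a commutative Hopf brace `(A, Δ, Δ')` and forming
`ρ(a) = S(a_1) a_{21'} ⊗ a_{22'}`, the comultiplication reconstructed by
`a_{1'} T(a_{2'(-1)}) ⊗ a_{2'(0)}` equals `Δ`. -/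
theorem matched_pair_brace_mutually_inverse {k : Type*} [Field k]
    {A : Type*} [Ring A] [Algebra k A] :
    (∀ (B : HopfStruct k A), (∀ x y : A, x * y = y * x) →
      ∀ (ρ φ : A →ₗ[k] A ⊗[k] A),
        IsHopfMatchedPair k A A B.Δ B.ε B.Δ B.ε ρ φ →
        (∀ a : A,
          B.Δ a = LinearMap.mul' k (A ⊗[k] A) (TensorProduct.map ρ φ (B.Δ a))) →
        ∀ a : A,
          ρ a = ρmap k A (Δfromρ k A B.Δ B.S ρ) B.Δ (Sfromρ k A B.S ρ) a) ∧
    (∀ (HB : HopfBrace k A), (∀ x y : A, x * y = y * x) →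
      ∀ a : A,
        HB.fst.Δ a
          = Δfromρ k A HB.snd.Δ HB.snd.S
              (ρmap k A HB.fst.Δ HB.snd.Δ HB.fst.S) a) :=
  ⟨fun B hcomm ρ φ ⟨_, hρ, _, hφ, _, _, hm, _⟩ =>
    matched_pair_brace_mutually_inverse_general.1 B hcomm ρ φ hρ hφ hm,
  matched_pair_brace_mutually_inverse_general.2⟩

end HopfPaper
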